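/- Let n jobs be given, where job j has processing time p_j ∈ ℕ, weight w_j ∈ ℕ, release date r_j ∈ ℕ and due date d_j ∈ ℕ. For J ⊆ {1,…,n}, t ∈ ℕ∞ and ε ∈ ℤ, define OPT[J,t,ε] ∈ ℕ∞ as the minimum makespan (completion time of the last job) over all schedules of J starting at time t whose weighted number of late jobs ∑_{j∈J} w_j·𝟙[C_j > d_j] equals ε; set OPT[J,t,ε] = ∞ if t = ∞, if ε < 0, or if no such schedule exists. Then for every J ⊆ {1,…,n} with |J| ≥ 2, every t ∈ ℕ and every ε ∈ ℤ, OPT[J,t,ε] = min_{j∈J} min( OPT[{j}, OPT[J∖{j}, t, ε], 0], OPT[{j}, OPT[J∖{j}, t, ε − w_j], w_j] ). -/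

import Mathlib

/-- `ValidFrom p r t s` : the list `s` of pairs (job, completion time) is a valid
schedule starting at time `t` : the first job `j` satisfies
`C_j ≥ max t (r j) + p j`, and each further job `j` satisfies
`C_j ≥ max C_prev (r j) + p j` (idle time is allowed). -/
def ValidFrom {n : ℕ} (p r : Fin n → ℕ) : ℕ → List (Fin n × ℕ) → Prop
  | _, [] => True
  | t, (j, c) :: s => max t (r j) + p j ≤ c ∧ ValidFrom p r c s

/-- The makespan of a schedule : the completion time of its last job. -/
def makespan {n : ℕ} (s : List (Fin n × ℕ)) : ℕ :=
  ((s.map Prod.snd).getLast?).getD 0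

/-- The weighted number of late jobs `∑_j w j * 𝟙[C_j > d j]` of a schedule. -/
def lateWeight {n : ℕ} (w d : Fin n → ℕ) (s : List (Fin n × ℕ)) : ℕ :=
  (s.map fun jc => if d jc.1 < jc.2 then w jc.1 else 0).sum

/-- `OPT p w r d J t ε` : minimum makespan over all schedules of the jobs of `J`
starting at time `t` whose weighted number of late jobs equals `ε`
(`⊤` if `t = ⊤`, if `ε < 0`, or if no such schedule exists). -/
noncomputable def OPT {n : ℕ} (p w r d : Fin n → ℕ) (J : Finset (Fin n))
    (t : ℕ∞) (ε : ℤ) : ℕ∞ :=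
  sInf { v : ℕ∞ | ∃ t₀ : ℕ, (t₀ : ℕ∞) = t ∧ ∃ s : List (Fin n × ℕ),
    (s.map Prod.fst).Nodup ∧ (s.map Prod.fst).toFinset = J ∧
    ValidFrom p r t₀ s ∧ (lateWeight w d s : ℤ) = ε ∧ v = (makespan s : ℕ∞) }

section Schedules

variable {n : ℕ} {p w r d : Fin n → ℕ}

theorem makespan_concat (s : List (Fin n × ℕ)) (jc : Fin n × ℕ) :
    makespan (s ++ [jc]) = jc.2 := by
  simp [makespan]

theorem makespan_append (s : List (Fin n × ℕ)) {s' : List (Fin n × ℕ)} (hs' : s' ≠ []) :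
    makespan (s ++ s') = makespan s' := by
  obtain ⟨u, jc, rfl⟩ := (List.eq_nil_or_concat' s').resolve_left hs'
  rw [← List.append_assoc, makespan_concat, makespan_concat]

theorem lateWeight_append (w d : Fin n → ℕ) (s s' : List (Fin n × ℕ)) :
    lateWeight w d (s ++ s') = lateWeight w d s + lateWeight w d s' := by
  simp [lateWeight]

theorem validFrom_append {s : List (Fin n × ℕ)} (hs : s ≠ []) (s' : List (Fin n × ℕ)) (t : ℕ) :
    ValidFrom p r t (s ++ s') ↔ ValidFrom p r t s ∧ ValidFrom p r (makespan s) s' := by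
  induction s generalizing t with
  | nil => exact absurd rfl hs
  | cons jc s ih =>
    rcases eq_or_ne s [] with rfl | h
    · simp [ValidFrom, makespan]
    · have hm : makespan (jc :: s) = makespan s := makespan_append [jc] h
      simp [ValidFrom, ih h, hm, and_assoc]

theorem OPT_le_makespan {s : List (Fin n × ℕ)} {t : ℕ} (hnd : (s.map Prod.fst).Nodup)
    (hv : ValidFrom p r t s) :
    OPT p w r d (s.map Prod.fst).toFinset t (lateWeight w d s) ≤ makespan s :=
  sInf_le ⟨t, rfl, s, hnd, rfl, hv, rfl, rfl⟩

theorem exists_schedule_of_OPT_ne_top {J : Finset (Fin n)} {t : ℕ∞} {ε : ℤ}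
    (h : OPT p w r d J t ε ≠ ⊤) :
    ∃ t₀ : ℕ, (t₀ : ℕ∞) = t ∧ ∃ s : List (Fin n × ℕ),
      (s.map Prod.fst).Nodup ∧ (s.map Prod.fst).toFinset = J ∧
      ValidFrom p r t₀ s ∧ (lateWeight w d s : ℤ) = ε ∧
      OPT p w r d J t ε = (makespan s : ℕ∞) := by
  unfold OPT at h ⊢
  exact csInf_mem (Set.nonempty_iff_ne_empty.2 fun he => h ((congrArg sInf he).trans sInf_empty))

/-- Scheduling `J` optimally and then `K` yields a schedule of `J ∪ K`. -/
theorem OPT_union_le {J K : Finset (Fin n)} (hJ : J.Nonempty) (hK : K.Nonempty)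
    (hJK : Disjoint J K) (t : ℕ∞) (x y : ℤ) :
    OPT p w r d (J ∪ K) t (x + y) ≤ OPT p w r d K (OPT p w r d J t x) y := by
  by_cases h : OPT p w r d K (OPT p w r d J t x) y = ⊤
  · exact h ▸ le_top
  obtain ⟨t₁, ht₁, s', hnd', rfl, hv', rfl, hm'⟩ := exists_schedule_of_OPT_ne_top h
  obtain ⟨t₀, rfl, s, hnd, rfl, hv, rfl, hm⟩ :=
    exists_schedule_of_OPT_ne_top (ht₁ ▸ ENat.natCast_ne_top t₁)
  obtain rfl : t₁ = makespan s := by exact_mod_cast ht₁.trans hm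
  have hs : s ≠ [] := by rintro rfl; simp at hJ
  have hs' : s' ≠ [] := by rintro rfl; simp at hK
  have hle := OPT_le_makespan (w := w) (d := d) (s := s ++ s')
    (by simpa [List.nodup_append'] using
      ⟨hnd, hnd', List.disjoint_toFinset_iff_disjoint.1 hJK⟩)
    ((validFrom_append hs s' t₀).2 ⟨hv, hv'⟩)
  rw [hm', ← makespan_append s hs']
  simpa [lateWeight_append] using hle

/-- Appending job `j` with completion time `c` to a nonempty schedule `s` is no better than
restarting `j` after an optimal schedule of the jobs of `s` with the same late weight. -/
theorem OPT_singleton_le {s : List (Fin n × ℕ)} (hs : s ≠ []) {j : Fin n} {c t : ℕ}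
    (hnd : (s.map Prod.fst).Nodup) (hv : ValidFrom p r t (s ++ [(j, c)])) :
    OPT p w r d {j} (OPT p w r d (s.map Prod.fst).toFinset t (lateWeight w d s))
      ((if d j < c then w j else 0 : ℕ) : ℤ) ≤ c := by
  obtain ⟨hvs, hc, -⟩ := (validFrom_append hs _ t).1 hv
  have hle := OPT_le_makespan (w := w) (d := d) hnd hvs
  obtain ⟨T, hT⟩ := ENat.ne_top_iff_exists.1 (ne_top_of_le_ne_top (ENat.natCast_ne_top _) hle)
  rw [← hT] at hle ⊢
  have hTs : T ≤ makespan s := by exact_mod_cast hle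
  have hvj : ValidFrom p r T [(j, c)] := ⟨by omega, trivial⟩
  simpa [lateWeight, makespan] using
    OPT_le_makespan (w := w) (d := d) (s := [(j, c)]) (by simp) hvj

end Schedules

theorem stmt6 {n : ℕ} (p w r d : Fin n → ℕ) (J : Finset (Fin n)) (hJ : 2 ≤ J.card)
    (t : ℕ) (ε : ℤ) :
    OPT p w r d J (t : ℕ∞) ε =
      ⨅ j ∈ J,
        min (OPT p w r d {j} (OPT p w r d (J.erase j) (t : ℕ∞) ε) 0)
            (OPT p w r d {j} (OPT p w r d (J.erase j) (t : ℕ∞) (ε - (w j : ℤ))) (w j)) := by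
  apply le_antisymm
  · refine le_iInf₂ fun j hj => ?_
    have hne : (J.erase j).Nonempty := by
      rw [← Finset.card_pos, Finset.card_erase_of_mem hj]; omega
    have key (x y : ℤ) : OPT p w r d J t (x + y) ≤
        OPT p w r d {j} (OPT p w r d (J.erase j) t x) y := by
      have hle := OPT_union_le (p := p) (w := w) (r := r) (d := d) hne
        (Finset.singleton_nonempty j) (by simp) t x y
      rwa [Finset.union_comm, ← Finset.insert_eq, Finset.insert_erase hj] at hle
    exact le_min (by simpa using key ε 0) (by simpa using key (ε - w j) (w j))
  · by_cases h : OPT p w r d J t ε = ⊤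
    · exact h ▸ le_top
    obtain ⟨t₀, ht₀, s, hnd, rfl, hv, rfl, hm⟩ := exists_schedule_of_OPT_ne_top h
    obtain rfl : t₀ = t := by exact_mod_cast ht₀
    rw [hm]
    rcases List.eq_nil_or_concat' s with rfl | ⟨s, ⟨j, c⟩, rfl⟩
    · simp at hJ
    have hs : s ≠ [] := by rintro rfl; simp at hJ
    obtain ⟨hnd, -, hdisj⟩ := List.nodup_append'.1 (List.map_append ▸ hnd)
    have hj : j ∉ (s.map Prod.fst).toFinset := by
      simpa [List.disjoint_singleton] using hdisj
    have herase : ((s ++ [(j, c)]).map Prod.fst).toFinset.erase j =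
        (s.map Prod.fst).toFinset := by
      rw [List.map_append, List.toFinset_append]
      ext i
      by_cases hi : i = j <;> simp_all
    have hle := OPT_singleton_le (w := w) (d := d) hs hnd hv
    refine (iInf₂_le j (by simp)).trans ?_
    rw [herase, makespan_concat, lateWeight_append]
    by_cases hd : d j < c
    · exact (min_le_right _ _).trans (by simpa [lateWeight, hd] using hle)
    · exact (min_le_left _ _).trans (by simpa [lateWeight, hd] using hle)
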